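/- arXiv:1209.5653 — 2 statements merged into one kernel-verified Lean document; each statement's English description precedes it below -/
import Mathlib

section
/- For n ≥ 1, the element -1 of Cl_{n+1} belongs to M_n (indeed (e_i e_{i+1})² = -1 for each i), it generates a central subgroup {1, -1} of order 2, and the quotient group M_n / {±1} is isomorphic to (ℤ/2ℤ)^n. -/
/-!
`Cl_m` is the Clifford algebra of `Q_m(x) = -(x,x)` on `ℝ^m`, with generators
`e_1, …, e_m`.  `M_n` is the subgroup of the unit group of `Cl_{n+1}` generated by
the elements `e_i e_{i+1}` for `1 ≤ i ≤ n`.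

Theorem: for `n ≥ 1`, the element `-1` of `Cl_{n+1}` belongs to `M_n`
(indeed `(e_i e_{i+1})² = -1` for each `i`), it generates a central subgroup
`{1, -1}` of order `2`, and `M_n / {±1} ≅ (ℤ/2ℤ)^n` (expressed via a surjective
homomorphism onto `(ℤ/2ℤ)^n` with kernel the subgroup generated by `-1`).
-/

noncomputable section

/-- The quadratic form `Q_m(x) = -(x, x)` on `ℝ^m`. -/
def Qneg (m : ℕ) : QuadraticForm ℝ (Fin m → ℝ) :=
  QuadraticMap.weightedSumSquares ℝ (fun _ : Fin m => (-1 : ℝ))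

/-- The real Clifford algebra `Cl_m` of `Q_m`. -/
abbrev Cl (m : ℕ) := CliffordAlgebra (Qneg m)

/-- The generator `e_i ∈ Cl_m`, the image of the `i`-th standard basis vector. -/
def eCl (m : ℕ) (i : Fin m) : Cl m := CliffordAlgebra.ι (Qneg m) (Pi.single i 1)

/-- `M_n`: the subgroup of the unit group of `Cl_{n+1}` generated by the elements
`e_i e_{i+1}`, `1 ≤ i ≤ n`. -/
def Mgrp (n : ℕ) : Subgroup (Cl (n + 1))ˣ :=
  Subgroup.closure {u : (Cl (n + 1))ˣ | ∃ i : Fin n,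
    (u : Cl (n + 1)) = eCl (n + 1) i.castSucc * eCl (n + 1) i.succ}

/-!
Commuting past `w` is a character: if the commutators `⁅x, w⁆` lie in a central subgroup, they
depend multiplicatively on both `x` and `w`. The generators `e_k` of the Clifford algebra pairwise
have commutator `-1`, so `e_k e_{k+1}` commutes with every `e_j` except `e_k` and `e_{k+1}`, hence
has commutator `-1` with the partial product `e_1 ⋯ e_i` when `i = k` and `1` otherwise (for
`i > k` the two signs cancel). The characters of these partial products therefore send the
generators of `M_n` to the standard basis of `(ℤ/2ℤ)^n`. Since the generators of `M_n` commute and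
square to `1` modulo `±1`, the kernel is no larger than `±1`.
-/

open scoped commutatorElement

section ElementaryAbelian

variable {ι : Type*} [DecidableEq ι] {m : ℕ}

theorem map_prod_zpow_of_map_eq_mulSingle [Fintype ι] {Q : Type*} [CommGroup Q] {g : ι → Q}
    {φ : Q →* (ι → Multiplicative (ZMod m))}
    (hφ : ∀ i, φ (g i) = Pi.mulSingle i (Multiplicative.ofAdd 1)) (a : ι → ℤ) (j : ι) :
    φ (∏ i, g i ^ a i) j = Multiplicative.ofAdd (a j : ZMod m) := by
  rw [map_prod, Finset.prod_apply, Finset.prod_eq_single j]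
  · rw [map_zpow, hφ, Pi.pow_apply, Pi.mulSingle_eq_same, ← ofAdd_zsmul, zsmul_one]
  · intro i _ hij
    rw [map_zpow, hφ, Pi.pow_apply, Pi.mulSingle_eq_of_ne hij.symm, one_zpow]
  · simp

theorem bijective_of_map_eq_mulSingle [Finite ι] {Q : Type*} [CommGroup Q] {g : ι → Q}
    (hg : Subgroup.closure (Set.range g) = ⊤) (hpow : ∀ i, g i ^ m = 1)
    {φ : Q →* (ι → Multiplicative (ZMod m))}
    (hφ : ∀ i, φ (g i) = Pi.mulSingle i (Multiplicative.ofAdd 1)) : Function.Bijective φ := by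
  have := Fintype.ofFinite ι
  constructor
  · rw [injective_iff_map_eq_one]
    intro x hx
    obtain ⟨a, rfl⟩ := Subgroup.mem_closure_range_iff_of_fintype.1 (hg ▸ Subgroup.mem_top x)
    refine Finset.prod_eq_one fun i _ => ?_
    have hi : (a i : ZMod m) = 0 := by
      simpa [hx] using (map_prod_zpow_of_map_eq_mulSingle hφ a i).symm
    obtain ⟨b, hb⟩ := (ZMod.intCast_zmod_eq_zero_iff_dvd (a i) m).1 hi
    rw [hb, zpow_mul, zpow_natCast, hpow, one_zpow]
  · intro v
    refine ⟨∏ i, g i ^ ((v i).toAdd.cast : ℤ), funext fun j => ?_⟩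
    rw [map_prod_zpow_of_map_eq_mulSingle hφ, ZMod.intCast_zmod_cast, ofAdd_toAdd]

end ElementaryAbelian

section Commutator

variable {G : Type*} [Group G]

theorem commutatorElement_mul_left_of_mem_center {a b c : G}
    (h : ⁅b, c⁆ ∈ Subgroup.center G) : ⁅a * b, c⁆ = ⁅a, c⁆ * ⁅b, c⁆ := by
  rw [commutatorElement_mul_left_eq_conj_mul, Subgroup.mem_center_iff.1 h a,
    mul_inv_cancel_right, Subgroup.mem_center_iff.1 h]

theorem commutatorElement_mul_right_of_mem_center {a b c : G}
    (h : ⁅a, c⁆ ∈ Subgroup.center G) : ⁅a, b * c⁆ = ⁅a, b⁆ * ⁅a, c⁆ := by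
  rw [commutatorElement_mul_right_eq_mul_conj, mul_assoc _ b, Subgroup.mem_center_iff.1 h b,
    ← mul_assoc, mul_inv_cancel_right]

theorem commutatorElement_mem_iff_commute_mk {N : Subgroup G} [N.Normal] {x y : G} :
    ⁅x, y⁆ ∈ N ↔ Commute (x : G ⧸ N) (y : G ⧸ N) := by
  rw [← QuotientGroup.eq_one_iff, ← commutatorElement_eq_one_iff_commute]
  rfl

theorem commutatorElement_mem_of_mem_closure {N : Subgroup G} [N.Normal] {S : Set G} {w : G}
    (hS : ∀ s ∈ S, ⁅s, w⁆ ∈ N) {x : G} (hx : x ∈ Subgroup.closure S) : ⁅x, w⁆ ∈ N := by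
  have hle : Subgroup.closure S ≤
      (Subgroup.centralizer {(w : G ⧸ N)}).comap (QuotientGroup.mk' N) :=
    (Subgroup.closure_le _).2 fun s hs => Subgroup.mem_centralizer_singleton_iff.2
      (commutatorElement_mem_iff_commute_mk.1 (hS s hs))
  exact commutatorElement_mem_iff_commute_mk.2 (Subgroup.mem_centralizer_singleton_iff.1 (hle hx))

theorem normal_of_le_center {N : Subgroup G} (hN : N ≤ Subgroup.center G) : N.Normal :=
  ⟨fun x hx y => by rwa [Subgroup.mem_center_iff.1 (hN hx) y, mul_inv_cancel_right]⟩

theorem closure_range_mk_eq_top {ι : Type*} {g : ι → G}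
    (hg : Subgroup.closure (Set.range g) = ⊤) (N : Subgroup G) [N.Normal] :
    Subgroup.closure (Set.range fun i => (g i : G ⧸ N)) = ⊤ := by
  rw [← Subgroup.map_top_of_surjective _ (QuotientGroup.mk'_surjective N), ← hg,
    MonoidHom.map_closure, ← Set.range_comp]
  rfl

theorem isMulCommutative_quotient_of_closure_range {ι : Type*} {g : ι → G}
    (hg : Subgroup.closure (Set.range g) = ⊤) {N : Subgroup G} [N.Normal]
    (hcomm : ∀ i j, ⁅g i, g j⁆ ∈ N) : IsMulCommutative (G ⧸ N) := by
  have : IsMulCommutative (Subgroup.closure (Set.range fun i => (g i : G ⧸ N))) := by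
    refine Subgroup.isMulCommutative_closure ?_
    rintro _ ⟨i, rfl⟩ _ ⟨j, rfl⟩
    exact commutatorElement_mem_iff_commute_mk.1 (hcomm i j)
  rw [closure_range_mk_eq_top hg] at this
  exact ⟨⟨fun x y => setLike_mul_comm (Subgroup.mem_top x) (Subgroup.mem_top y)⟩⟩

open scoped IsMulCommutative in
theorem surjective_and_ker_eq_of_map_eq_mulSingle {ι : Type*} [Finite ι] [DecidableEq ι] {m : ℕ}
    {g : ι → G} (hg : Subgroup.closure (Set.range g) = ⊤) {N : Subgroup G} [N.Normal]
    (hpow : ∀ i, g i ^ m ∈ N) (hcomm : ∀ i j, ⁅g i, g j⁆ ∈ N)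
    {φ : G →* (ι → Multiplicative (ZMod m))} (hN : N ≤ φ.ker)
    (hφ : ∀ i, φ (g i) = Pi.mulSingle i (Multiplicative.ofAdd 1)) :
    Function.Surjective φ ∧ φ.ker = N := by
  have := isMulCommutative_quotient_of_closure_range hg hcomm
  have hbij : Function.Bijective (QuotientGroup.lift N φ hN) :=
    bijective_of_map_eq_mulSingle (closure_range_mk_eq_top hg N)
      (fun i => (QuotientGroup.eq_one_iff (g i ^ m)).2 (hpow i)) hφ
  refine ⟨hbij.surjective.comp (QuotientGroup.mk'_surjective N), le_antisymm (fun x hx => ?_) hN⟩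
  exact (QuotientGroup.eq_one_iff x).1 (hbij.injective (hx.trans (map_one _).symm))

theorem mul_sq_eq_commutatorElement_mul {a b : G} (h : Commute (a ^ 2) b) :
    (a * b) ^ 2 = ⁅a, b⁆ * (a ^ 2 * b ^ 2) :=
  calc (a * b) ^ 2 = ⁅a, b⁆ * (b * a ^ 2 * b) := by
        rw [commutatorElement_def, sq (a * b)]
        group
    _ = ⁅a, b⁆ * (a ^ 2 * b ^ 2) := by rw [← h.eq, mul_assoc, ← sq]

/-- The homomorphism `x ↦ ⁅x, w⁆` from a subgroup `H` to a central subgroup `N` containing all the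
commutators `⁅x, w⁆`, `x ∈ H`. -/
def commutatorHom {N H : Subgroup G} (hN : N ≤ Subgroup.center G) {w : G}
    (hw : ∀ x ∈ H, ⁅x, w⁆ ∈ N) : H →* N :=
  MonoidHom.mk' (fun x => ⟨⁅(x : G), w⁆, hw x x.2⟩) fun _ y =>
    Subtype.ext (commutatorElement_mul_left_of_mem_center (hN (hw y y.2)))

theorem zpowers_coe_subgroupOf {H : Subgroup G} (x : H) :
    (Subgroup.zpowers (x : G)).subgroupOf H = Subgroup.zpowers x := by
  ext y
  simp [Subgroup.mem_subgroupOf, Subgroup.mem_zpowers_iff, Subtype.ext_iff]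

theorem closure_range_codRestrict_eq_top {ι : Type*} (g : ι → G) :
    Subgroup.closure (Set.range fun i =>
      (⟨g i, Subgroup.subset_closure ⟨i, rfl⟩⟩ : Subgroup.closure (Set.range g))) = ⊤ := by
  rw [← Subgroup.closure_closure_coe_preimage (k := Set.range g)]
  congr 1
  ext x
  simp [Subtype.ext_iff]

end Commutator

section DualFamily

variable {G : Type*} [Group G] {z : G} {m : ℕ}

/-- The exponent, modulo the order `m` of `z`, to which `z` is raised to give an element of
`⟨z⟩`. The value `m = 0` stands for infinite order. -/
def zpowersLog (hm : orderOf z = m) : Subgroup.zpowers z ≃* Multiplicative (ZMod m) :=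
  (zmodMulEquivOfGenerator (g := (⟨z, Subgroup.mem_zpowers z⟩ : Subgroup.zpowers z))
    (fun ⟨_, k, hk⟩ => ⟨k, Subtype.ext hk⟩) ((Nat.card_zpowers z).trans hm)).symm

theorem zpowersLog_self (hm : orderOf z = m) :
    zpowersLog hm ⟨z, Subgroup.mem_zpowers z⟩ = Multiplicative.ofAdd 1 :=
  zmodMulEquivOfGenerator_symm_apply_generator _ _

theorem exists_surjective_ker_eq_of_dual {ι : Type*} [Finite ι] [DecidableEq ι]
    (hz : z ∈ Subgroup.center G) (hm : orderOf z = m) {g w : ι → G}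
    (hpow : ∀ i, g i ^ m ∈ Subgroup.zpowers z)
    (hcomm : ∀ i j, ⁅g i, g j⁆ ∈ Subgroup.zpowers z)
    (hdual : ∀ i j, ⁅g i, w j⁆ = if j = i then z else 1) :
    ∃ φ : Subgroup.closure (Set.range g) →* (ι → Multiplicative (ZMod m)),
      Function.Surjective φ ∧ φ.ker = (Subgroup.zpowers z).subgroupOf _ := by
  have hN : Subgroup.zpowers z ≤ Subgroup.center G := Subgroup.zpowers_le.2 hz
  have := normal_of_le_center hN
  have hw (j : ι) : ∀ x ∈ Subgroup.closure (Set.range g), ⁅x, w j⁆ ∈ Subgroup.zpowers z := by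
    refine fun x hx => commutatorElement_mem_of_mem_closure ?_ hx
    rintro _ ⟨i, rfl⟩
    rw [hdual]
    split_ifs
    exacts [Subgroup.mem_zpowers z, one_mem _]
  let φ : Subgroup.closure (Set.range g) →* (ι → Multiplicative (ZMod m)) :=
    MonoidHom.pi fun j => (zpowersLog hm).toMonoidHom.comp (commutatorHom hN (hw j))
  refine ⟨φ, surjective_and_ker_eq_of_map_eq_mulSingle (closure_range_codRestrict_eq_top g)
    hpow hcomm (fun x hx => funext fun j => ?_) (fun i => funext fun j => ?_)⟩
  · have hxw : ⁅(x : G), w j⁆ = 1 := commutatorElement_eq_one_iff_mul_comm.2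
      (Subgroup.mem_center_iff.1 (hN hx) (w j)).symm
    exact (congrArg (zpowersLog hm) (Subtype.ext hxw)).trans (map_one _)
  · by_cases hij : j = i
    · subst hij
      rw [Pi.mulSingle_eq_same, ← zpowersLog_self hm]
      exact congrArg (zpowersLog hm) (Subtype.ext ((hdual j j).trans (if_pos rfl)))
    · rw [Pi.mulSingle_eq_of_ne hij, ← map_one (zpowersLog hm)]
      exact congrArg (zpowersLog hm) (Subtype.ext ((hdual i j).trans (if_neg hij)))

end DualFamily

section Adjacent

variable {G : Type*} [Group G] {z : G} {n : ℕ} {E : Fin (n + 1) → G}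

theorem commutatorElement_adjacent_mul (hz : z ∈ Subgroup.center G)
    (hE : Pairwise fun i j => ⁅E i, E j⁆ = z) (k : Fin n) (j : Fin (n + 1)) :
    ⁅E k.castSucc * E k.succ, E j⁆ =
      if j = k.castSucc ∨ j = k.succ then z else z ^ 2 := by
  have hk : k.castSucc ≠ k.succ := Fin.castSucc_lt_succ.ne
  have hmem : ⁅E k.succ, E j⁆ ∈ Subgroup.center G := by
    obtain rfl | hj := eq_or_ne k.succ j
    · simp
    · rwa [hE hj]
  rw [commutatorElement_mul_left_of_mem_center hmem]
  split_ifs with h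
  · obtain rfl | rfl := h
    · rw [commutatorElement_self, one_mul, hE hk.symm]
    · rw [commutatorElement_self, mul_one, hE hk]
  · rw [not_or] at h
    rw [hE (Ne.symm h.1), hE (Ne.symm h.2), sq]

theorem commutatorElement_adjacent_mul_partialProd (hz : z ∈ Subgroup.center G) (hz2 : z ^ 2 = 1)
    (hE : Pairwise fun i j => ⁅E i, E j⁆ = z) (k : Fin n) (j : Fin (n + 2)) :
    ⁅E k.castSucc * E k.succ, Fin.partialProd E j⁆ = if (j : ℕ) = k + 1 then z else 1 := by
  induction j using Fin.induction with
  | zero => simp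
  | succ j ih =>
    have hj := commutatorElement_adjacent_mul hz hE k j
    have hmem : ⁅E k.castSucc * E k.succ, E j⁆ ∈ Subgroup.center G := by
      rw [hj]
      split_ifs
      exacts [hz, pow_mem hz 2]
    rw [Fin.partialProd_succ, commutatorElement_mul_right_of_mem_center hmem, ih, hj, hz2]
    simp only [Fin.ext_iff, Fin.val_castSucc, Fin.val_succ, add_left_inj]
    split_ifs <;> first | omega | simp [← sq, hz2]

theorem exists_surjective_ker_eq_of_adjacent_mul (hz : z ∈ Subgroup.center G)
    (hz2 : orderOf z = 2) (hsq : ∀ i, E i ^ 2 ∈ Subgroup.zpowers z)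
    (hE : Pairwise fun i j => ⁅E i, E j⁆ = z) :
    ∃ φ : Subgroup.closure (Set.range fun k : Fin n => E k.castSucc * E k.succ) →*
        (Fin n → Multiplicative (ZMod 2)),
      Function.Surjective φ ∧ φ.ker = (Subgroup.zpowers z).subgroupOf _ := by
  have hN : Subgroup.zpowers z ≤ Subgroup.center G := Subgroup.zpowers_le.2 hz
  have := normal_of_le_center hN
  have hz_sq : z ^ 2 = 1 := hz2 ▸ pow_orderOf_eq_one z
  have hgE (k : Fin n) (j : Fin (n + 1)) :
      ⁅E k.castSucc * E k.succ, E j⁆ ∈ Subgroup.zpowers z := by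
    rw [commutatorElement_adjacent_mul hz hE]
    split_ifs
    exacts [Subgroup.mem_zpowers z, Subgroup.npow_mem_zpowers z 2]
  refine exists_surjective_ker_eq_of_dual (w := fun i : Fin n => Fin.partialProd E i.succ.castSucc)
    hz hz2 (fun k => ?_) (fun k l => ?_) (fun k i => ?_)
  · rw [mul_sq_eq_commutatorElement_mul (Subgroup.mem_center_iff.1 (hN (hsq _)) _).symm,
      hE Fin.castSucc_lt_succ.ne]
    exact mul_mem (Subgroup.mem_zpowers z) (mul_mem (hsq _) (hsq _))
  · rw [commutatorElement_mul_right_of_mem_center (hN (hgE k _))]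
    exact mul_mem (hgE k _) (hgE k _)
  · simp [commutatorElement_adjacent_mul_partialProd hz hz_sq hE, Fin.ext_iff]

end Adjacent

section Clifford

theorem eCl_mul_self (m : ℕ) (i : Fin m) : eCl m i * eCl m i = -1 := by
  have h : Qneg m (Pi.single i 1) = -1 := by
    simp [Qneg, QuadraticMap.weightedSumSquares_apply, Pi.single_apply]
  rw [eCl, CliffordAlgebra.ι_sq_scalar, h, map_neg, map_one]

theorem eCl_mul_eCl_of_ne {m : ℕ} {i j : Fin m} (hij : i ≠ j) :
    eCl m i * eCl m j = -(eCl m j * eCl m i) := by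
  refine CliffordAlgebra.ι_mul_ι_comm_of_isOrtho (QuadraticMap.isOrtho_def.2 ?_)
  simp only [Qneg, QuadraticMap.weightedSumSquares_apply, ← Finset.sum_add_distrib]
  refine Finset.sum_congr rfl fun k _ => ?_
  obtain rfl | hk := eq_or_ne k i
  · simp [hij]
  · simp [hk]

/-- The generator `e_i` as a unit of `Cl_m`, with inverse `-e_i`. -/
def eClUnit (m : ℕ) (i : Fin m) : (Cl m)ˣ where
  val := eCl m i
  inv := -eCl m i
  val_inv := by rw [mul_neg, eCl_mul_self, neg_neg]
  inv_val := by rw [neg_mul, eCl_mul_self, neg_neg]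

theorem eClUnit_sq (m : ℕ) (i : Fin m) : eClUnit m i ^ 2 = -1 :=
  Units.ext ((sq _).trans (eCl_mul_self m i))

theorem pairwise_commutatorElement_eClUnit (m : ℕ) :
    Pairwise fun i j => ⁅eClUnit m i, eClUnit m j⁆ = -1 := by
  intro i j hij
  rw [commutatorElement_def, mul_inv_eq_iff_eq_mul, mul_inv_eq_iff_eq_mul, neg_one_mul, neg_mul]
  exact Units.ext (eCl_mul_eCl_of_ne hij)

theorem eClUnit_mul_eClUnit_sq {m : ℕ} {i j : Fin m} (hij : i ≠ j) :
    (eClUnit m i * eClUnit m j) ^ 2 = -1 := by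
  have hcomm : Commute (eClUnit m i ^ 2) (eClUnit m j) := by
    rw [eClUnit_sq]
    exact Commute.neg_one_left _
  rw [mul_sq_eq_commutatorElement_mul hcomm, pairwise_commutatorElement_eClUnit m hij, eClUnit_sq,
    eClUnit_sq, neg_mul_neg, one_mul, mul_one]

theorem orderOf_neg_one_units_of_charZero (R : Type*) [Ring R] [CharZero R] :
    orderOf (-1 : Rˣ) = 2 := by
  rw [← orderOf_units, Units.val_neg, Units.val_one, orderOf_neg_one, ringChar.eq_zero,
    if_neg two_ne_zero.symm]

theorem charZero_cliffordAlgebra {K V : Type*} [Field K] [CharZero K] [AddCommGroup V] [Module K V]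
    (Q : QuadraticForm K V) : CharZero (CliffordAlgebra Q) :=
  have : Invertible (2 : K) := invertibleOfNonzero two_ne_zero
  charZero_of_injective_algebraMap (algebraMap K _).injective

theorem neg_one_mem_center_units (R : Type*) [Ring R] : (-1 : Rˣ) ∈ Subgroup.center Rˣ :=
  Subgroup.mem_center_iff.2 fun x => (Commute.neg_one_right x).eq

theorem Mgrp_eq_closure_range (n : ℕ) :
    Mgrp n = Subgroup.closure
      (Set.range fun k : Fin n => eClUnit (n + 1) k.castSucc * eClUnit (n + 1) k.succ) := by
  rw [Mgrp]
  congr 1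
  ext u
  simp [Units.ext_iff, eClUnit, eq_comm]

theorem neg_one_mem_Mgrp {n : ℕ} (k : Fin n) : (-1 : (Cl (n + 1))ˣ) ∈ Mgrp n := by
  rw [← eClUnit_mul_eClUnit_sq (Fin.castSucc_lt_succ (i := k)).ne, Mgrp_eq_closure_range]
  exact pow_mem (Subgroup.subset_closure (Set.mem_range_self k)) 2

theorem orderOf_neg_one_units_Cl (m : ℕ) : orderOf (-1 : (Cl m)ˣ) = 2 :=
  have := charZero_cliffordAlgebra (Qneg m)
  orderOf_neg_one_units_of_charZero (Cl m)

theorem exists_Mgrp_hom_surjective_ker_eq (n : ℕ) :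
    ∃ φ : Mgrp n →* (Fin n → Multiplicative (ZMod 2)),
      Function.Surjective φ ∧
        φ.ker = (Subgroup.zpowers (-1 : (Cl (n + 1))ˣ)).subgroupOf (Mgrp n) := by
  rw [Mgrp_eq_closure_range]
  exact exists_surjective_ker_eq_of_adjacent_mul (neg_one_mem_center_units _)
    (orderOf_neg_one_units_Cl _) (fun i => eClUnit_sq (n + 1) i ▸ Subgroup.mem_zpowers _)
    (pairwise_commutatorElement_eClUnit _)

end Clifford

theorem negOne_mem_and_quotient_iso (n : ℕ) (hn : 1 ≤ n) :
    (-1 : (Cl (n + 1))ˣ) ∈ Mgrp n ∧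
    (∀ i : Fin n, (eCl (n + 1) i.castSucc * eCl (n + 1) i.succ) ^ 2 = -1) ∧
    ∃ u : ↥(Mgrp n), ((u : (Cl (n + 1))ˣ) : Cl (n + 1)) = -1 ∧
      u ∈ Subgroup.center ↥(Mgrp n) ∧
      Nat.card ↥(Subgroup.zpowers u) = 2 ∧
      ∃ φ : ↥(Mgrp n) →* (Fin n → Multiplicative (ZMod 2)),
        Function.Surjective φ ∧ φ.ker = Subgroup.zpowers u := by
  have hmem : (-1 : (Cl (n + 1))ˣ) ∈ Mgrp n := neg_one_mem_Mgrp ⟨0, hn⟩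
  have hsq (i : Fin n) : (eCl (n + 1) i.castSucc * eCl (n + 1) i.succ) ^ 2 = -1 :=
    congrArg Units.val (eClUnit_mul_eClUnit_sq Fin.castSucc_lt_succ.ne)
  have hcenter : (⟨-1, hmem⟩ : Mgrp n) ∈ Subgroup.center (Mgrp n) :=
    Subgroup.mem_center_iff.2 fun x =>
      Subtype.ext (Subgroup.mem_center_iff.1 (neg_one_mem_center_units (Cl (n + 1))) x.1)
  have hcard : Nat.card (Subgroup.zpowers (⟨-1, hmem⟩ : Mgrp n)) = 2 := by
    rw [Nat.card_zpowers, Subgroup.orderOf_mk, orderOf_neg_one_units_Cl]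
  obtain ⟨φ, hφ, hker⟩ := exists_Mgrp_hom_surjective_ker_eq n
  exact ⟨hmem, hsq, ⟨-1, hmem⟩, rfl, hcenter, hcard, φ, hφ,
    hker.trans (zpowers_coe_subgroupOf ⟨-1, hmem⟩)⟩
end
end

section
/- For n ≥ 1, the subgroup of the unit group of Cl_n generated by {e_1, …, e_n} is isomorphic as a group to the subgroup of the unit group of Cl_{n+1} generated by {e_i e_{i+1} : 1 ≤ i ≤ n}; an isomorphism is induced by sending the generator e_i of the first group to the element e_i e_{n+1} of the second group. -/
/-!
`Cl_m` is the Clifford algebra of `Q_m(x) = -(x,x)` on `ℝ^m`, with generators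
`e_1, …, e_m`.  `M'_n` is the subgroup of the unit group of `Cl_n` generated by
`{e_1, …, e_n}`, and `M_n` is the subgroup of the unit group of `Cl_{n+1}`
generated by `{e_i e_{i+1} : 1 ≤ i ≤ n}`.

Theorem: for `n ≥ 1`, `M'_n ≅ M_n` as groups, with an isomorphism induced by
sending the generator `e_i` of `M'_n` to the element `e_i e_{n+1}` of `M_n`.
-/

noncomputable section

/-- `M'_n`: the subgroup of the unit group of `Cl_n` generated by `e_1, …, e_n`. -/
def Mgrp' (n : ℕ) : Subgroup (Cl n)ˣ :=
  Subgroup.closure {u : (Cl n)ˣ | ∃ i : Fin n, (u : Cl n) = eCl n i}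

/-!
Adjoining a unit vector `e₀` with `e₀² = -1` orthogonal to everything embeds `Cl(Q)` in the larger
Clifford algebra by `v ↦ v e₀`: this is Mathlib's isomorphism of `Cl(Q)` with the even subalgebra,
`v ↦ e₀ v`, precomposed with the grade involution. The embedding identifies the group generated by
the `e_i` with the one generated by the `e_i e_{n+1}`. Since `e_{n+1} e_i e_{n+1} = e_i`, the
elements `x_k = e_{n+1}⁻¹ e_k` are the `e_k e_{n+1}` together with `x_{n+1} = 1`, and
`e_i e_{i+1} = (e_i e_{n+1}) x_{i+1}`; descending induction from `i = n` shows that the products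
`e_i e_{i+1}` generate the same group.
-/

section Closure

open Subgroup

theorem closure_range_mul_succ_eq_closure_range_mul_last {G : Type*} [Group G] {n : ℕ}
    (g : Fin (n + 1) → G)
    (h : ∀ i : Fin n, g (Fin.last n) * g i.castSucc * g (Fin.last n) = g i.castSucc) :
    closure (Set.range fun i : Fin n => g i.castSucc * g i.succ) =
      closure (Set.range fun i : Fin n => g i.castSucc * g (Fin.last n)) := by
  have inv_last_mul (i : Fin n) :
      (g (Fin.last n))⁻¹ * g i.castSucc = g i.castSucc * g (Fin.last n) := by
    rw [inv_mul_eq_iff_eq_mul, ← mul_assoc, h]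
  have mul_eq (i : Fin n) (k : Fin (n + 1)) :
      g i.castSucc * g k = g i.castSucc * g (Fin.last n) * ((g (Fin.last n))⁻¹ * g k) := by
    group
  apply le_antisymm <;> rw [closure_le, Set.range_subset_iff] <;> intro i
  · have inv_last_mul_mem (k : Fin (n + 1)) : (g (Fin.last n))⁻¹ * g k ∈
        closure (Set.range fun i : Fin n => g i.castSucc * g (Fin.last n)) := by
      cases k using Fin.lastCases with
      | last => simp
      | cast j => exact inv_last_mul j ▸ subset_closure ⟨j, rfl⟩
    rw [mul_eq]
    exact mul_mem (subset_closure ⟨i, rfl⟩) (inv_last_mul_mem i.succ)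
  · have inv_last_mul_mem (k : Fin (n + 1)) : (g (Fin.last n))⁻¹ * g k ∈
        closure (Set.range fun i : Fin n => g i.castSucc * g i.succ) := by
      induction k using Fin.reverseInduction with
      | last => simp
      | cast j ih =>
        rw [inv_last_mul, ← mul_mem_cancel_right ih, ← mul_eq]
        exact subset_closure ⟨j, rfl⟩
    exact inv_last_mul i ▸ inv_last_mul_mem i.castSucc

end Closure

section UnitsClosure

variable {κ A B : Type*} [Monoid A] [Monoid B]

/-- The subgroup of `Aˣ` generated by those members of the family `a` that are units. -/
def unitsClosure (a : κ → A) : Subgroup Aˣ :=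
  Subgroup.closure {u : Aˣ | ∃ i, (u : A) = a i}

theorem unitsClosure_val (u : κ → Aˣ) :
    unitsClosure (fun i => (u i : A)) = Subgroup.closure (Set.range u) := by
  simp only [unitsClosure, Units.val_inj, Set.range, eq_comm]

theorem map_unitsClosure (f : A →* B) {a : κ → A} (ha : ∀ i, IsUnit (a i)) :
    (unitsClosure a).map (Units.map f) = unitsClosure fun i => f (a i) := by
  choose u hu using ha
  obtain rfl : (fun i => (u i : A)) = a := funext hu
  rw [unitsClosure_val, MonoidHom.map_closure, ← Set.range_comp, ← unitsClosure_val]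
  rfl

/-- The isomorphism of unit subgroups that an injective monoid homomorphism induces on a family of
units and its image. -/
def unitsClosureEquiv {f : A →* B} (hf : Function.Injective f) {a : κ → A}
    (ha : ∀ i, IsUnit (a i)) : unitsClosure a ≃* unitsClosure fun i => f (a i) :=
  ((unitsClosure a).equivMapOfInjective _ (Units.map_injective hf)).trans
    (MulEquiv.subgroupCongr (map_unitsClosure f ha))

theorem val_unitsClosureEquiv {f : A →* B} (hf : Function.Injective f) {a : κ → A}
    (ha : ∀ i, IsUnit (a i)) (u : unitsClosure a) :
    (unitsClosureEquiv hf ha u).1.val = f u.1.val :=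
  rfl

theorem unitsClosure_mul_succ_eq_unitsClosure_mul_last {n : ℕ} {a : Fin (n + 1) → A}
    (ha : ∀ i, IsUnit (a i))
    (h : ∀ i : Fin n, a (Fin.last n) * a i.castSucc * a (Fin.last n) = a i.castSucc) :
    unitsClosure (fun i : Fin n => a i.castSucc * a i.succ) =
      unitsClosure fun i : Fin n => a i.castSucc * a (Fin.last n) := by
  choose u hu using ha
  obtain rfl : (fun i => (u i : A)) = a := funext hu
  simp only [← Units.val_mul, unitsClosure_val]
  exact closure_range_mul_succ_eq_closure_range_mul_last u fun i => Units.ext (h i)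

end UnitsClosure

section OneUp

open CliffordAlgebra EquivEven

variable {R M : Type*} [CommRing R] [AddCommGroup M] [Module R M]

/-- The embedding `v ↦ v e₀` of a Clifford algebra into the one with an additional orthogonal
vector `e₀` of square `-1`. The grade involution turns the `e₀ v` of Mathlib's `toEven` into
`v e₀`. -/
def oneUpEmbedding (Q : QuadraticForm R M) : CliffordAlgebra Q →ₐ[R] CliffordAlgebra (Q' Q) :=
  (even (Q' Q)).val.comp ((toEven Q).comp involute)

theorem oneUpEmbedding_ι (Q : QuadraticForm R M) (m : M) :
    oneUpEmbedding Q (ι Q m) = v Q m * e0 Q := by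
  rw [← neg_e0_mul_v, ← toEven_ι]
  simp [oneUpEmbedding]

theorem oneUpEmbedding_injective (Q : QuadraticForm R M) :
    Function.Injective (oneUpEmbedding Q) :=
  Subtype.val_injective.comp ((equivEven Q).injective.comp involute_involutive.injective)

end OneUp

section Diagonal

open CliffordAlgebra EquivEven QuadraticMap

variable {R : Type*} [CommRing R]

/-- The image of the `i`-th standard basis vector in the Clifford algebra of the diagonal form
`x ↦ ∑ j, w j * x j ^ 2`. -/
def diagGen {κ : Type*} [Fintype κ] [DecidableEq κ] (w : κ → R) (i : κ) :
    CliffordAlgebra (weightedSumSquares R w) :=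
  ι (weightedSumSquares R w) (Pi.single i 1)

theorem isUnit_diagGen {κ : Type*} [Fintype κ] [DecidableEq κ] {w : κ → R} {i : κ}
    (hi : IsUnit (w i)) : IsUnit (diagGen w i) := by
  apply isUnit_ι_of_isUnit
  simpa [weightedSumSquares_apply, Pi.single_apply] using hi

variable {n : ℕ} {w : Fin (n + 1) → R}

/-- A diagonal form whose last weight is `-1` is the form `Q - r²` on the augmented space of the
diagonal form `Q` with the remaining weights. -/
def diagIsometry (hw : w (Fin.last n) = -1) :
    (weightedSumSquares R w).IsometryEquiv (Q' (weightedSumSquares R (Fin.init w))) where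
  toFun x := (Fin.init x, x (Fin.last n))
  invFun y := Fin.snoc y.1 y.2
  map_add' _ _ := rfl
  map_smul' _ _ := rfl
  left_inv x := Fin.snoc_init_self x
  right_inv y := by simp
  map_app' x := by
    simp [weightedSumSquares_apply, Fin.sum_univ_castSucc, hw, Fin.init]

theorem diagIsometry_apply (hw : w (Fin.last n) = -1) (x : Fin (n + 1) → R) :
    diagIsometry hw x = (Fin.init x, x (Fin.last n)) :=
  rfl

theorem equivOfIsometry_diagGen_castSucc (hw : w (Fin.last n) = -1) (i : Fin n) :
    equivOfIsometry (diagIsometry hw) (diagGen w i.castSucc) = v _ (Pi.single i 1) := by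
  have diagIsometry_single :
      diagIsometry hw (Pi.single i.castSucc 1) = (Pi.single i 1, 0) := by
    ext j <;> simp [diagIsometry_apply, Fin.init, Pi.single_apply]
  exact (map_apply_ι _ _).trans (congrArg (ι _) diagIsometry_single)

theorem equivOfIsometry_diagGen_last (hw : w (Fin.last n) = -1) :
    equivOfIsometry (diagIsometry hw) (diagGen w (Fin.last n)) = e0 _ := by
  have diagIsometry_single : diagIsometry hw (Pi.single (Fin.last n) 1) = (0, 1) := by
    ext j <;> simp [diagIsometry_apply, Fin.init]
  exact (map_apply_ι _ _).trans (congrArg (ι _) diagIsometry_single)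

theorem diagGen_last_mul_castSucc_mul_last (hw : w (Fin.last n) = -1) (i : Fin n) :
    diagGen w (Fin.last n) * diagGen w i.castSucc * diagGen w (Fin.last n) =
      diagGen w i.castSucc := by
  apply (equivOfIsometry (diagIsometry hw)).injective
  simp only [map_mul, equivOfIsometry_diagGen_last, equivOfIsometry_diagGen_castSucc,
    e0_mul_v_mul_e0]

/-- The embedding of the Clifford algebra on the generators `e_1, …, e_n` in the one on
`e_1, …, e_{n+1}` that sends `e_i` to `e_i e_{n+1}`. -/
def diagEmbedding (hw : w (Fin.last n) = -1) :
    CliffordAlgebra (weightedSumSquares R (Fin.init w)) →ₐ[R]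
      CliffordAlgebra (weightedSumSquares R w) :=
  (equivOfIsometry (diagIsometry hw)).symm.toAlgHom.comp (oneUpEmbedding _)

theorem diagEmbedding_diagGen (hw : w (Fin.last n) = -1) (i : Fin n) :
    diagEmbedding hw (diagGen (Fin.init w) i) =
      diagGen w i.castSucc * diagGen w (Fin.last n) := by
  refine (equivOfIsometry (diagIsometry hw)).symm_apply_eq.2 ?_
  rw [map_mul, equivOfIsometry_diagGen_castSucc, equivOfIsometry_diagGen_last]
  exact oneUpEmbedding_ι _ _

theorem diagEmbedding_injective (hw : w (Fin.last n) = -1) :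
    Function.Injective (diagEmbedding hw) :=
  (equivOfIsometry (diagIsometry hw)).symm.injective.comp (oneUpEmbedding_injective _)

theorem unitsClosure_diagEmbedding_diagGen (hw : ∀ i, IsUnit (w i))
    (hlast : w (Fin.last n) = -1) :
    unitsClosure (fun i => diagEmbedding hlast (diagGen (Fin.init w) i)) =
      unitsClosure fun i : Fin n => diagGen w i.castSucc * diagGen w i.succ := by
  simp only [diagEmbedding_diagGen]
  exact (unitsClosure_mul_succ_eq_unitsClosure_mul_last (fun i => isUnit_diagGen (hw i))
    (diagGen_last_mul_castSucc_mul_last hlast)).symm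

end Diagonal

theorem Mgrp'_iso_Mgrp_general {R : Type*} [CommRing R] {n : ℕ} {w : Fin (n + 1) → R}
    (hw : ∀ i, IsUnit (w i)) (hlast : w (Fin.last n) = -1) :
    ∃ φ : unitsClosure (diagGen (Fin.init w)) ≃*
        unitsClosure (fun i : Fin n => diagGen w i.castSucc * diagGen w i.succ),
      ∀ (i : Fin n) (u : unitsClosure (diagGen (Fin.init w))),
        u.1.val = diagGen (Fin.init w) i →
          (φ u).1.val = diagGen w i.castSucc * diagGen w (Fin.last n) := by
  let ψ := unitsClosureEquiv (f := (diagEmbedding hlast).toMonoidHom)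
    (diagEmbedding_injective hlast) fun i : Fin n => isUnit_diagGen (hw i.castSucc)
  refine ⟨ψ.trans (MulEquiv.subgroupCongr (unitsClosure_diagEmbedding_diagGen hw hlast)),
    fun i u hu => ?_⟩
  calc (ψ u).1.val = diagEmbedding hlast u.1.val := val_unitsClosureEquiv _ _ _
    _ = diagGen w i.castSucc * diagGen w (Fin.last n) := by rw [hu, diagEmbedding_diagGen]

theorem Mgrp'_iso_Mgrp (n : ℕ) (hn : 1 ≤ n) :
    ∃ φ : ↥(Mgrp' n) ≃* ↥(Mgrp n),
      ∀ (i : Fin n) (u : ↥(Mgrp' n)), ((u : (Cl n)ˣ) : Cl n) = eCl n i →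
        ((φ u : (Cl (n + 1))ˣ) : Cl (n + 1)) =
          eCl (n + 1) i.castSucc * eCl (n + 1) (Fin.last n) :=
  Mgrp'_iso_Mgrp_general (w := fun _ => -1) (fun _ => isUnit_one.neg) rfl
end
end
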